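/- arXiv:1206.4176 — 2 statements merged into one kernel-verified Lean document; each statement's English description precedes it below -/
import Mathlib

section
/- Let M ≥ 1 be an integer, let ℓ > 0, w > 0, θ ∈ (0,1], p_c > 0, and let a > 0 (effective channel gain) and I ≥ 0 (interference-plus-noise power, held fixed). Define the SINR γ(p) = a·p/(I + σ²) with σ² > 0, and the energy-efficiency utility u(p) = ℓ · w·log₂(1 + θ·γ(p)) · (1 − exp(−γ(p)))^M / (p + p_c). Then u is quasiconcave on the interval [0, ∞); that is, for all p₁, p₂ ≥ 0 and all λ ∈ (0,1), u(λ·p₁ + (1−λ)·p₂) ≥ min{u(p₁), u(p₂)}. -/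
/-!
Call `x * g' x / g x` the elasticity of `g`. If it is nonnegative and antitone on `(0, ∞)`, then so
is `g' / g`, hence `(x + c) * (g' / g) x` is antitone. The derivative of `g x / (x + c)` has the
sign of `(x + c) * (g' / g) x - 1`, so it changes sign at most once, from `+` to `-`.

Elasticities add under products and scale under powers, and dilating the argument of a function
dilates that of its elasticity, so only `log (1 + x)` and `1 - exp (-x)` have to be examined. Their
elasticities are `x / ((1 + x) * log (1 + x))` and `x / (exp x - 1)`, reciprocals of secant slopes
of the convex functions `y * log y` and `exp`.
-/

open Set

theorem quasiconcaveOn_of_deriv_nonneg_of_le {f : ℝ → ℝ} {s : Set ℝ} (hs : Convex ℝ s)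
    (hf : ContinuousOn f s) (hf' : DifferentiableOn ℝ f (interior s))
    (hsign : ∀ x ∈ interior s, ∀ y ∈ interior s, x ≤ y → 0 ≤ deriv f y → 0 ≤ deriv f x) :
    QuasiconcaveOn ℝ s f := by
  refine fun r ↦ (ordConnected_of_Ioo ?_).convex
  rintro x ⟨hxs, hrx⟩ z ⟨hzs, hrz⟩ - y ⟨hxy, hyz⟩
  have hxzs : Icc x z ⊆ s := hs.ordConnected.out hxs hzs
  have hxzi : Ioo x z ⊆ interior s := interior_maximal (Ioo_subset_Icc_self.trans hxzs) isOpen_Ioo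
  have hyi : y ∈ interior s := hxzi ⟨hxy, hyz⟩
  refine ⟨interior_subset hyi, ?_⟩
  rcases le_or_gt 0 (deriv f y) with hy | hy
  · have hsub : Ioo x y ⊆ interior s := (Ioo_subset_Ioo_right hyz.le).trans hxzi
    have hmono : MonotoneOn f (Icc x y) := by
      refine monotoneOn_of_deriv_nonneg (convex_Icc x y)
        (hf.mono ((Icc_subset_Icc_right hyz.le).trans hxzs)) ?_ ?_ <;> rw [interior_Icc]
      · exact hf'.mono hsub
      · exact fun t ht ↦ hsign t (hsub ht) y hyi ht.2.le hy
    exact hrx.trans (hmono (left_mem_Icc.2 hxy.le) (right_mem_Icc.2 hxy.le) hxy.le)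
  · have hsub : Ioo y z ⊆ interior s := (Ioo_subset_Ioo_left hxy.le).trans hxzi
    have hanti : AntitoneOn f (Icc y z) := by
      refine antitoneOn_of_deriv_nonpos (convex_Icc y z)
        (hf.mono ((Icc_subset_Icc_left hxy.le).trans hxzs)) ?_ ?_ <;> rw [interior_Icc]
      · exact hf'.mono hsub
      · exact fun t ht ↦ le_of_not_ge fun h ↦ hy.not_ge (hsign y hyi t (hsub ht) ht.1.le h)
    exact hrz.trans (hanti (left_mem_Icc.2 hyz.le) (right_mem_Icc.2 hyz.le) hyz.le)

/-- The elasticity `x * g' x / g x` of `g` at `x`, that is, the derivative of `log g` with respect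
to `log x`. -/
noncomputable def elasticity (g : ℝ → ℝ) (x : ℝ) : ℝ :=
  x * logDeriv g x

/-- A function on `[0, ∞)`, positive and differentiable on `(0, ∞)`, whose elasticity is nonnegative
and antitone there. Only continuity is asked at `0`, where `g` may vanish. -/
structure AntitoneElasticity (g : ℝ → ℝ) : Prop where
  continuousOn : ContinuousOn g (Ici 0)
  pos : ∀ {x}, 0 < x → 0 < g x
  differentiableAt : ∀ {x}, 0 < x → DifferentiableAt ℝ g x
  elasticity_nonneg : ∀ {x}, 0 < x → 0 ≤ elasticity g x
  antitoneOn : AntitoneOn (elasticity g) (Ioi 0)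

theorem elasticity_mul {g h : ℝ → ℝ} {x : ℝ} (hgx : g x ≠ 0) (hhx : h x ≠ 0)
    (hg : DifferentiableAt ℝ g x) (hh : DifferentiableAt ℝ h x) :
    elasticity (fun t ↦ g t * h t) x = elasticity g x + elasticity h x := by
  rw [elasticity, logDeriv_mul x hgx hhx hg hh, mul_add, elasticity, elasticity]

theorem elasticity_rpow {g : ℝ → ℝ} {x : ℝ} (m : ℝ) (hgx : 0 < g x)
    (hg : DifferentiableAt ℝ g x) :
    elasticity (fun t ↦ g t ^ m) x = m * elasticity g x := by
  simp only [elasticity, logDeriv_apply]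
  rw [deriv_rpow_const hg (.inl hgx.ne'), Real.rpow_sub_one hgx.ne']
  have := Real.rpow_pos_of_pos hgx m
  field_simp

theorem elasticity_comp_mul_left (g : ℝ → ℝ) (k x : ℝ) :
    elasticity (fun t ↦ g (k * t)) x = elasticity g (k * x) := by
  simp only [elasticity, logDeriv_apply, deriv_comp_mul_left, smul_eq_mul]
  ring

theorem elasticity_log_one_add {x : ℝ} (hx : 0 < x) :
    elasticity (fun t ↦ Real.log (1 + t)) x = (slope (fun y ↦ y * Real.log y) 1 (1 + x))⁻¹ := by
  have hderiv : HasDerivAt (fun t ↦ Real.log (1 + t)) (1 / (1 + x)) x :=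
    ((hasDerivAt_id x).const_add 1).log (by positivity)
  have hlog : 0 < Real.log (1 + x) := Real.log_pos (by linarith)
  rw [elasticity, logDeriv_apply, hderiv.deriv, slope_def_field, Real.log_one, mul_zero, sub_zero,
    add_sub_cancel_left]
  field_simp

theorem elasticity_one_sub_exp_neg (x : ℝ) :
    elasticity (fun t ↦ 1 - Real.exp (-t)) x = (slope Real.exp 0 (0 + x))⁻¹ := by
  have hderiv : HasDerivAt (fun t ↦ 1 - Real.exp (-t)) (Real.exp (-x)) x := by
    simpa using (hasDerivAt_neg x).exp.const_sub 1
  rw [elasticity, logDeriv_apply, hderiv.deriv, slope_def_field, Real.exp_zero, zero_add,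
    sub_zero, Real.exp_neg]
  field_simp

namespace AntitoneElasticity

variable {g h : ℝ → ℝ}

theorem of_eq_inv_slope {f : ℝ → ℝ} {a : ℝ} (hcont : ContinuousOn g (Ici 0))
    (hpos : ∀ {x}, 0 < x → 0 < g x) (hdiff : ∀ {x}, 0 < x → DifferentiableAt ℝ g x)
    (hconv : ConvexOn ℝ (Ici a) f) (hlt : ∀ y, a < y → f a < f y)
    (heq : ∀ {x}, 0 < x → elasticity g x = (slope f a (a + x))⁻¹) : AntitoneElasticity g := by
  have hslope {x : ℝ} (hx : 0 < x) : 0 < slope f a (a + x) := by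
    rw [slope_def_field]
    exact div_pos (sub_pos.2 (hlt _ (by linarith))) (by linarith)
  refine ⟨hcont, hpos, hdiff, fun hx ↦ ?_, fun x hx y hy hxy ↦ ?_⟩
  · exact heq hx ▸ (inv_pos.2 (hslope hx)).le
  · rw [mem_Ioi] at hx hy
    rw [heq hx, heq hy]
    refine inv_anti₀ (hslope hx) (hconv.monotoneOn_slope_gt self_mem_Ici ?_ ?_ (by linarith))
    · exact ⟨by simpa using hx.le, by linarith⟩
    · exact ⟨by simpa using hy.le, by linarith⟩

theorem log_one_add : AntitoneElasticity fun x ↦ Real.log (1 + x) := by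
  have hne {x : ℝ} (hx : 0 ≤ x) : 1 + x ≠ 0 := by positivity
  refine of_eq_inv_slope (ContinuousOn.log (by fun_prop) fun x hx ↦ hne hx)
    (fun hx ↦ Real.log_pos (by linarith)) (fun hx ↦ DifferentiableAt.log (by fun_prop) (hne hx.le))
    (Real.convexOn_mul_log.subset (Ici_subset_Ici.2 zero_le_one) (convex_Ici 1)) (fun y hy ↦ ?_)
    elasticity_log_one_add
  simpa using mul_pos (zero_lt_one.trans hy) (Real.log_pos hy)

theorem one_sub_exp_neg : AntitoneElasticity fun x ↦ 1 - Real.exp (-x) :=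
  of_eq_inv_slope (by fun_prop) (fun hx ↦ by simpa using hx) (fun _ ↦ by fun_prop)
    (convexOn_exp.subset (subset_univ _) (convex_Ici 0)) (fun _ ↦ Real.exp_lt_exp.2)
    (fun _ ↦ elasticity_one_sub_exp_neg _)

theorem mul (hg : AntitoneElasticity g) (hh : AntitoneElasticity h) :
    AntitoneElasticity fun x ↦ g x * h x := by
  have heq {x : ℝ} (hx : 0 < x) :
      elasticity (fun t ↦ g t * h t) x = elasticity g x + elasticity h x :=
    elasticity_mul (hg.pos hx).ne' (hh.pos hx).ne' (hg.differentiableAt hx) (hh.differentiableAt hx)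
  refine ⟨hg.continuousOn.mul hh.continuousOn, fun hx ↦ mul_pos (hg.pos hx) (hh.pos hx),
    fun hx ↦ (hg.differentiableAt hx).mul (hh.differentiableAt hx), fun hx ↦ ?_, ?_⟩
  · exact heq hx ▸ add_nonneg (hg.elasticity_nonneg hx) (hh.elasticity_nonneg hx)
  · exact (hg.antitoneOn.add hh.antitoneOn).congr fun x hx ↦ (heq hx).symm

theorem rpow (hg : AntitoneElasticity g) {m : ℝ} (hm : 0 ≤ m) :
    AntitoneElasticity fun x ↦ g x ^ m := by
  have heq {x : ℝ} (hx : 0 < x) : elasticity (fun t ↦ g t ^ m) x = m * elasticity g x :=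
    elasticity_rpow m (hg.pos hx) (hg.differentiableAt hx)
  refine ⟨hg.continuousOn.rpow_const fun x _ ↦ .inr hm, fun hx ↦ Real.rpow_pos_of_pos (hg.pos hx) m,
    fun hx ↦ (hg.differentiableAt hx).rpow_const (.inl (hg.pos hx).ne'), fun hx ↦ ?_, ?_⟩
  · exact heq hx ▸ mul_nonneg hm (hg.elasticity_nonneg hx)
  · exact ((monotone_mul_left_of_nonneg hm).comp_antitoneOn hg.antitoneOn).congr
      fun x hx ↦ (heq hx).symm

theorem comp_mul_left (hg : AntitoneElasticity g) {k : ℝ} (hk : 0 < k) :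
    AntitoneElasticity fun x ↦ g (k * x) := by
  refine ⟨hg.continuousOn.comp (by fun_prop) fun x hx ↦ mul_nonneg hk.le hx,
    fun hx ↦ hg.pos (mul_pos hk hx),
    fun hx ↦ (hg.differentiableAt (mul_pos hk hx)).comp _ (by fun_prop), fun hx ↦ ?_,
    fun x hx y hy hxy ↦ ?_⟩
  · exact elasticity_comp_mul_left g k _ ▸ hg.elasticity_nonneg (mul_pos hk hx)
  · simp only [elasticity_comp_mul_left]
    exact hg.antitoneOn (mul_pos hk hx) (mul_pos hk hy) (mul_le_mul_of_nonneg_left hxy hk.le)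

theorem antitoneOn_add_mul_logDeriv (hg : AntitoneElasticity g) {c : ℝ} (hc : 0 ≤ c) :
    AntitoneOn (fun x ↦ (x + c) * logDeriv g x) (Ioi 0) := by
  have heq {x : ℝ} (hx : 0 < x) : (x + c) * logDeriv g x = (1 + c / x) * elasticity g x := by
    rw [elasticity]
    field_simp
  intro x hx y hy hxy
  rw [mem_Ioi] at hx hy
  simp only [heq hx, heq hy]
  have := hg.elasticity_nonneg hy
  have := hg.antitoneOn hx hy hxy
  gcongr

theorem deriv_div_add_nonneg_iff (hg : AntitoneElasticity g) {c x : ℝ} (hc : 0 ≤ c) (hx : 0 < x) :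
    0 ≤ deriv (fun t ↦ g t / (t + c)) x ↔ 1 ≤ (x + c) * logDeriv g x := by
  have hgx := hg.pos hx
  have hderiv := (hg.differentiableAt hx).hasDerivAt.fun_div ((hasDerivAt_id' x).add_const c)
    (by positivity)
  rw [hderiv.deriv, le_div_iff₀ (by positivity), logDeriv_apply, ← mul_div_assoc, le_div_iff₀ hgx,
    zero_mul, sub_nonneg, mul_one, one_mul, mul_comm (x + c)]

theorem quasiconcaveOn_div_add (hg : AntitoneElasticity g) {c : ℝ} (hc : 0 < c) :
    QuasiconcaveOn ℝ (Ici 0) fun x ↦ g x / (x + c) := by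
  have hne {x : ℝ} (hx : 0 ≤ x) : x + c ≠ 0 := by positivity
  refine quasiconcaveOn_of_deriv_nonneg_of_le (convex_Ici 0)
    (hg.continuousOn.div (by fun_prop) fun x hx ↦ hne hx) ?_ ?_ <;> rw [interior_Ici]
  · exact fun x hx ↦ ((hg.differentiableAt hx).fun_div (by fun_prop)
      (hne (mem_Ioi.1 hx).le)).differentiableWithinAt
  · intro x hx y hy hxy
    rw [hg.deriv_div_add_nonneg_iff hc.le hx, hg.deriv_div_add_nonneg_iff hc.le hy]
    exact fun h ↦ h.trans (hg.antitoneOn_add_mul_logDeriv hc.le hx hy hxy)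

end AntitoneElasticity

theorem ee_utility_quasiconcave_general {m ℓ w θ pc a N : ℝ} (hm : 0 ≤ m) (hℓ : 0 ≤ ℓ)
    (hw : 0 ≤ w) (hθ : 0 < θ) (hpc : 0 < pc) (ha : 0 < a) (hN : 0 < N)
    {γ : ℝ → ℝ} (hγ : ∀ p, γ p = a * p / N) {u : ℝ → ℝ}
    (hu : ∀ p, u p =
      ℓ * (w * Real.logb 2 (1 + θ * γ p)) * (1 - Real.exp (-(γ p))) ^ m / (p + pc)) :
    QuasiconcaveOn ℝ (Ici 0) u := by
  have hb : 0 < a / N := div_pos ha hN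
  have hg : AntitoneElasticity fun p ↦
      Real.log (1 + θ * (a / N) * p) * (1 - Real.exp (-(a / N * p))) ^ m :=
    (AntitoneElasticity.log_one_add.comp_mul_left (mul_pos hθ hb)).mul
      ((AntitoneElasticity.one_sub_exp_neg.comp_mul_left hb).rpow hm)
  have hK : 0 ≤ ℓ * w / Real.log 2 := by positivity
  have hu' : u = fun p ↦ ℓ * w / Real.log 2 *
      (Real.log (1 + θ * (a / N) * p) * (1 - Real.exp (-(a / N * p))) ^ m / (p + pc)) := by
    ext p
    rw [hu, hγ, Real.logb, mul_div_right_comm a p N, ← mul_assoc θ]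
    ring
  rw [hu']
  exact (hg.quasiconcaveOn_div_add hpc).monotone_comp (monotone_mul_left_of_nonneg hK)

/-- Quasiconcavity of the energy-efficiency utility
`u(p) = ℓ · w·log₂(1 + θ·γ(p)) · (1 − exp(−γ(p)))^M / (p + p_c)`
with SINR `γ(p) = a·p/(I + σ²)`, on `[0, ∞)`. -/
theorem ee_utility_quasiconcave
    (M : ℕ) (hM : 1 ≤ M)
    (ℓ w θ pc a I σ2 : ℝ)
    (hℓ : 0 < ℓ) (hw : 0 < w) (hθ0 : 0 < θ) (hθ1 : θ ≤ 1)
    (hpc : 0 < pc) (ha : 0 < a) (hI : 0 ≤ I) (hσ : 0 < σ2)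
    (γ : ℝ → ℝ) (hγ : ∀ p, γ p = a * p / (I + σ2))
    (u : ℝ → ℝ)
    (hu : ∀ p, u p =
      ℓ * (w * Real.logb 2 (1 + θ * γ p)) * (1 - Real.exp (-(γ p))) ^ M / (p + pc)) :
    ∀ p₁ p₂ : ℝ, 0 ≤ p₁ → 0 ≤ p₂ → ∀ lam : ℝ, 0 < lam → lam < 1 →
      u (lam * p₁ + (1 - lam) * p₂) ≥ min (u p₁) (u p₂) :=
  have hqc : QuasiconcaveOn ℝ (Ici 0) u := ee_utility_quasiconcave_general M.cast_nonneg hℓ.le hw.le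
    hθ0 hpc ha (add_pos_of_nonneg_of_pos hI hσ) hγ fun p ↦ by rw [hu, Real.rpow_natCast]
  fun _ _ h₁ h₂ _ hl₀ hl₁ ↦ (quasiconcaveOn_iff_min_le.1 hqc).2 h₁ h₂ hl₀.le (sub_nonneg.2 hl₁.le)
    (add_sub_cancel _ _)
end

section
/- Consider K users with maximum power P_max > 0, circuit power p_c > 0, and matched-filter SINRs γ_k(p) = a_k·p_k/(Σ_{j≠k} b_{kj}·p_j + σ_k²), where a_k > 0, b_{kj} ≥ 0, σ_k² > 0, and utilities u_k(p) = ℓ · w·log₂(1 + θ·γ_k(p)) · (1 − exp(−γ_k(p)))^M/(p_k + p_c). For each k let γ_k* > 0 be the unique maximizer of the function γ ↦ ℓ·w·log₂(1+θγ)·(1−e^{−γ})^M/(γ·Ĩ_k + p_c) (assumed to exist and be unique). If p* and q* are two Nash equilibria of this game, i.e., vectors in [0, P_max]^K such that for every k and every p ∈ [0, P_max], u_k(p*_k, p*_{−k}) ≥ u_k(p, p*_{−k}) (and likewise for q*), and in both equilibria every user attains its optimal SINR, γ_k(p*) = γ_k* = γ_k(q*) for all k, then p* = q*. -/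
/-!
In both equilibria the SINRs are the same, so it suffices that the SINRs determine the powers.
Interference plus noise `I` is a standard interference function in the sense of Yates: monotone,
and `I (t • p) < t • I p` for `t > 1`. Let `t` be the largest ratio `I p j / I q j`, attained at
`k`. If `p / I p = q / I q`, then `p ≤ t • q`, so `t > 1` would give
`I p k ≤ I (t • q) k < t * I q k = I p k`. Hence `t ≤ 1` and `p ≤ q`; now swap `p` and `q`.
-/

section StandardInterference

variable {ι R : Type*} [Field R] [LinearOrder R] [IsStrictOrderedRing R]

/-- Yates' standard interference functions, on nonnegative power vectors. The positivity axiom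
of the usual definition is derived in `IsStandardInterference.pos`. -/
structure IsStandardInterference (I : (ι → R) → ι → R) : Prop where
  monotoneOn : MonotoneOn I (Set.Ici 0)
  scalable : ∀ ⦃p⦄, 0 ≤ p → ∀ ⦃t : R⦄, 1 < t → ∀ k, I (t • p) k < t * I p k

namespace IsStandardInterference

variable {I : (ι → R) → ι → R} {p q : ι → R}

theorem pos (hI : IsStandardInterference I) (hp : 0 ≤ p) (k : ι) : 0 < I p k := by
  have two_smul_nonneg : (0 : ι → R) ≤ (2 : R) • p := smul_nonneg zero_le_two hp
  have le_two_smul : p ≤ (2 : R) • p := le_smul_of_one_le_left hp one_le_two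
  have lt_two_mul : I p k < 2 * I p k :=
    (hI.monotoneOn hp two_smul_nonneg le_two_smul k).trans_lt (hI.scalable hp one_lt_two k)
  linarith

theorem le_of_div_eq_div [Finite ι] (hI : IsStandardInterference I) (hp : 0 ≤ p) (hq : 0 ≤ q)
    (h : p / I p = q / I q) : p ≤ q := by
  intro i
  have : Nonempty ι := ⟨i⟩
  obtain ⟨k, hk⟩ := Finite.exists_max fun j => I p j / I q j
  set t := I p k / I q k
  have le_smul : p ≤ t • q := fun j => calc
    p j = p j / I p j * I p j := (div_mul_cancel₀ _ (hI.pos hp j).ne').symm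
    _ = q j / I q j * I p j := congrArg (· * I p j) (congrFun h j)
    _ = I p j / I q j * q j := by ring
    _ ≤ t * q j := mul_le_mul_of_nonneg_right (hk j) (hq j)
  have t_le_one : t ≤ 1 := by
    by_contra! one_lt_t
    refine lt_irrefl (I p k) ?_
    calc
      I p k ≤ I (t • q) k := hI.monotoneOn hp (hp.trans le_smul) le_smul k
      _ < t * I q k := hI.scalable hq one_lt_t k
      _ = I p k := div_mul_cancel₀ _ (hI.pos hq k).ne'
  exact (le_smul i).trans (mul_le_of_le_one_left (hq i) t_le_one)

theorem injOn_div [Finite ι] (hI : IsStandardInterference I) :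
    Set.InjOn (fun p => p / I p) (Set.Ici 0) := fun _ hp _ hq h =>
  (hI.le_of_div_eq_div hp hq h).antisymm (hI.le_of_div_eq_div hq hp h.symm)

end IsStandardInterference

variable [Fintype ι] [DecidableEq ι]

/-- The interference plus noise seen by user `k` at the output of the matched filter: `b k j` is
the cross gain from user `j` to user `k`, and `σ2 k` is the noise power. -/
def interferencePlusNoise (b : ι → ι → R) (σ2 : ι → R) (p : ι → R) (k : ι) : R :=
  ∑ j ∈ Finset.univ.erase k, b k j * p j + σ2 k

/-- The matched-filter signal-to-interference-plus-noise ratio of user `k`, with direct gains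
`a`. -/
def sinr (a : ι → R) (b : ι → ι → R) (σ2 : ι → R) (p : ι → R) (k : ι) : R :=
  a k * p k / interferencePlusNoise b σ2 p k

theorem isStandardInterference_interferencePlusNoise {b : ι → ι → R} {σ2 : ι → R}
    (hb : ∀ k j, 0 ≤ b k j) (hσ : ∀ k, 0 < σ2 k) :
    IsStandardInterference (interferencePlusNoise b σ2) where
  monotoneOn _ _ _ _ hpq k := by
    unfold interferencePlusNoise
    gcongr with j
    · exact hb k j
    · exact hpq j
  scalable p _ t ht k := calc
    interferencePlusNoise b σ2 (t • p) k
        = t * ∑ j ∈ Finset.univ.erase k, b k j * p j + σ2 k := by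
      simp only [interferencePlusNoise, Pi.smul_apply, smul_eq_mul, Finset.mul_sum,
        mul_left_comm]
    _ < t * ∑ j ∈ Finset.univ.erase k, b k j * p j + t * σ2 k := by
      gcongr
      exact lt_mul_of_one_lt_left (hσ k) ht
    _ = t * interferencePlusNoise b σ2 p k := (mul_add ..).symm

theorem nash_equilibrium_unique_general {a : ι → R} {b : ι → ι → R} {σ2 : ι → R}
    (ha : ∀ k, a k ≠ 0) (hb : ∀ k j, 0 ≤ b k j) (hσ : ∀ k, 0 < σ2 k) :
    Set.InjOn (sinr a b σ2) (Set.Ici 0) := by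
  intro p hp q hq h
  refine (isStandardInterference_interferencePlusNoise hb hσ).injOn_div hp hq (funext fun k => ?_)
  have sinr_eq := congrFun h k
  simp only [sinr, mul_div_assoc] at sinr_eq
  exact mul_left_cancel₀ (ha k) sinr_eq

end StandardInterference

/-- Uniqueness of the Nash equilibrium of the non-cooperative energy-efficiency
power-control game with matched-filter SINRs, when in both equilibria every user
attains its EE-optimal SINR `γ_k*`. -/
theorem nash_equilibrium_unique
    (K M : ℕ) (hM : 1 ≤ M)
    (ℓ w θ pc Pmax : ℝ)
    (hℓ : 0 < ℓ) (hw : 0 < w) (hθ0 : 0 < θ) (hθ1 : θ ≤ 1)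
    (hpc : 0 < pc) (hPmax : 0 < Pmax)
    (a : Fin K → ℝ) (ha : ∀ k, 0 < a k)
    (b : Fin K → Fin K → ℝ) (hb : ∀ k j, 0 ≤ b k j)
    (σ2 : Fin K → ℝ) (hσ : ∀ k, 0 < σ2 k)
    -- matched-filter SINR of user k under power vector p
    (γ : Fin K → (Fin K → ℝ) → ℝ)
    (hγ : ∀ k p, γ k p =
      a k * p k / (∑ j ∈ Finset.univ.erase k, b k j * p j + σ2 k))
    -- energy-efficiency utility of user k
    (u : Fin K → (Fin K → ℝ) → ℝ)
    (hu : ∀ k p, u k p =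
      ℓ * (w * Real.logb 2 (1 + θ * γ k p)) * (1 - Real.exp (-(γ k p))) ^ M /
        (p k + pc))
    -- normalized interference-plus-noise levels
    (Itld : Fin K → ℝ)
    -- γ* k > 0 is the unique maximizer of γ ↦ ℓ·w·log₂(1+θγ)·(1−e^{−γ})^M/(γ·Ĩ_k + p_c)
    (γstar : Fin K → ℝ) (hγstar_pos : ∀ k, 0 < γstar k)
    (hγstar_max : ∀ k, ∀ g : ℝ, 0 ≤ g → g ≠ γstar k →
      ℓ * (w * Real.logb 2 (1 + θ * g)) * (1 - Real.exp (-g)) ^ M /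
          (g * Itld k + pc) <
      ℓ * (w * Real.logb 2 (1 + θ * γstar k)) * (1 - Real.exp (-(γstar k))) ^ M /
          (γstar k * Itld k + pc))
    -- p* and q* are feasible power vectors
    (pstar qstar : Fin K → ℝ)
    (hp_mem : ∀ k, pstar k ∈ Set.Icc (0 : ℝ) Pmax)
    (hq_mem : ∀ k, qstar k ∈ Set.Icc (0 : ℝ) Pmax)
    -- p* and q* are Nash equilibria
    (hp_nash : ∀ k, ∀ p ∈ Set.Icc (0 : ℝ) Pmax,
      u k (Function.update pstar k p) ≤ u k pstar)
    (hq_nash : ∀ k, ∀ p ∈ Set.Icc (0 : ℝ) Pmax,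
      u k (Function.update qstar k p) ≤ u k qstar)
    -- in both equilibria every user attains its optimal SINR
    (hp_sinr : ∀ k, γ k pstar = γstar k)
    (hq_sinr : ∀ k, γ k qstar = γstar k) :
    pstar = qstar :=
  nash_equilibrium_unique_general (fun k => (ha k).ne') hb hσ
    (fun k => (hp_mem k).1) (fun k => (hq_mem k).1) <| funext fun k => calc
      sinr a b σ2 pstar k = γ k pstar := (hγ k pstar).symm
      _ = γ k qstar := (hp_sinr k).trans (hq_sinr k).symm
      _ = sinr a b σ2 qstar k := hγ k qstar
end
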